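/- Let K be a field of characteristic 0 and let p, q ∈ Kˣ be roots of unity with p ∉ {1, −1} and q ∉ {1, −1}. If the quantum Weyl algebras A_1^p(K) and A_1^q(K) are isomorphic as K-algebras, then p is a positive integer power of q, q is a positive integer power of p, and consequently p and q have the same multiplicative order. -/

import Mathlib

/-- The defining relation of the quantum Weyl algebra `A_1^q(K)`:
`x * y = q • (y * x) + 1`, where `x, y` are the two free generators. -/
inductive WeylRel (K : Type*) [Field K] (q : K) :
    FreeAlgebra K (Fin 2) → FreeAlgebra K (Fin 2) → Prop
  | rel : WeylRel K q (FreeAlgebra.ι K 0 * FreeAlgebra.ι K 1)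
      (q • (FreeAlgebra.ι K 1 * FreeAlgebra.ι K 0) + 1)

/-- The quantum Weyl algebra `A_1^q(K)`. -/
abbrev QuantumWeyl (K : Type*) [Field K] (q : K) := RingQuot (WeylRel K q)

/-- The images of the two free generators in `A_1^q(K)`; `wgen K q 0` is `x`
and `wgen K q 1` is `y`. -/
noncomputable def wgen (K : Type*) [Field K] (q : K) (i : Fin 2) : QuantumWeyl K q :=
  RingQuot.mkAlgHom K (WeylRel K q) (FreeAlgebra.ι K i)


open SkewMonoidAlgebra Multiplicative in
lemma skew_lead {R : Type*} [Field R] [MulSemiringAction (Multiplicative ℕ) R]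
    (a b : SkewMonoidAlgebra R (Multiplicative ℕ)) (m n : ℕ)
    (ha : ∀ i, m < i → a.coeff (ofAdd i) = 0) (hb : ∀ i, n < i → b.coeff (ofAdd i) = 0) :
    (a * b).coeff (ofAdd (m + n)) = a.coeff (ofAdd m) * (ofAdd m • b.coeff (ofAdd n)) := by
  have key := coeff_mul_antidiagonal_of_finset a b (ofAdd (m + n))
    ((Finset.HasAntidiagonal.antidiagonal (m + n) : Finset (ℕ × ℕ))) (by
      intro p
      exact Finset.HasAntidiagonal.mem_antidiagonal (n := m + n) (a := ((toAdd p.1, toAdd p.2) : ℕ × ℕ)))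
  rw [key]
  refine Finset.sum_eq_single (ofAdd m, ofAdd n) ?_ ?_
  · rintro ⟨i, j⟩ hij hne
    have hij' : toAdd i + toAdd j = m + n :=
      Finset.HasAntidiagonal.mem_antidiagonal (n := m + n) (a := ((toAdd i, toAdd j) : ℕ × ℕ)) |>.1 hij
    rcases lt_trichotomy m (toAdd i) with h | h | h
    · have := ha _ h
      simp only [ofAdd_toAdd] at this
      simp [this]
    · exfalso
      apply hne
      have h2 : toAdd j = n := by omega
      rw [← h2, h]; rfl
    · have := hb (toAdd j) (by omega)
      simp only [ofAdd_toAdd] at this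
      simp [this]
  · intro h
    exact absurd (Finset.HasAntidiagonal.mem_antidiagonal (n := m + n) (a := ((m, n) : ℕ × ℕ)) |>.2 rfl) h

open SkewMonoidAlgebra Multiplicative in
lemma skew_exists_lead {R : Type*} [Field R]
    (a : SkewMonoidAlgebra R (Multiplicative ℕ)) (ha : a ≠ 0) :
    ∃ m : ℕ, a.coeff (ofAdd m) ≠ 0 ∧ ∀ i, m < i → a.coeff (ofAdd i) = 0 := by
  have hne : a.support.Nonempty := by
    rw [Finset.nonempty_iff_ne_empty]
    simpa [support_eq_empty] using ha
  obtain ⟨m, hm, hmax⟩ := Finset.exists_max_image a.support (fun i => toAdd i) hne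
  refine ⟨toAdd m, ?_, ?_⟩
  · simpa using hm
  · intro i hi
    by_contra h
    have := hmax (ofAdd i) (mem_support_iff.2 h)
    simp only [toAdd_ofAdd] at this
    omega

open SkewMonoidAlgebra Multiplicative in
lemma skew_pow_eq_one {K R : Type*} [Field K] [Field R] [Algebra K R]
    [MulSemiringAction (Multiplicative ℕ) R] [SMulCommClass (Multiplicative ℕ) K R]
    (N : ℕ) (hN : ∀ r : R, (ofAdd N : Multiplicative ℕ) • r = r)
    (p : K) (a b : SkewMonoidAlgebra R (Multiplicative ℕ)) (ha : a ≠ 0) (hb : b ≠ 0)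
    (hab : a * b = p • (b * a)) : p ^ N = 1 := by
  obtain ⟨m, hm, ham⟩ := skew_exists_lead a ha
  obtain ⟨n, hn, hbn⟩ := skew_exists_lead b hb
  have h1 := skew_lead a b m n ham hbn
  have h2 := skew_lead b a n m hbn ham
  rw [hab, coeff_smul, Finsupp.smul_apply, add_comm m n, h2] at h1
  set f := a.coeff (ofAdd m)
  set g := b.coeff (ofAdd n)
  let nm : R → R := fun r => ∏ i ∈ Finset.range N, ((ofAdd i : Multiplicative ℕ) • r)
  have nm_mul : ∀ r s, nm (r * s) = nm r * nm s := fun r s => by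
    simp [nm, Finset.prod_mul_distrib]
  have nm_ne : ∀ r, r ≠ 0 → nm r ≠ 0 := fun r hr => by
    refine Finset.prod_ne_zero_iff.2 fun i _ h => hr ?_
    have := (MulSemiringAction.toRingHom (Multiplicative ℕ) R (ofAdd i)).injective
    apply this
    simpa using h
  have nm_one : ∀ r, nm ((ofAdd 1 : Multiplicative ℕ) • r) = nm r := fun r => by
    by_cases hr : r = 0
    · simp [hr]
    have e1 : nm ((ofAdd 1 : Multiplicative ℕ) • r) * r = nm r * r := by
      have e2 := Finset.prod_range_succ (fun i => (ofAdd i : Multiplicative ℕ) • r) N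
      have e3 := Finset.prod_range_succ' (fun i => (ofAdd i : Multiplicative ℕ) • r) N
      rw [e2] at e3
      rw [hN] at e3
      simp only [ofAdd_zero, one_smul] at e3
      simp only [nm, ← mul_smul, ← ofAdd_add]
      exact e3.symm
    exact mul_right_cancel₀ hr e1
  have nm_k : ∀ (k : ℕ) r, nm ((ofAdd k : Multiplicative ℕ) • r) = nm r := fun k => by
    induction k with
    | zero => intro r; simp
    | succ k ih =>
      intro r
      rw [ofAdd_add, mul_smul, ih, nm_one]
  have nm_p : nm (algebraMap K R p) = algebraMap K R (p ^ N) := by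
    simp [nm, smul_algebraMap]
  have h3 := congrArg nm h1
  rw [Algebra.smul_def, nm_mul, nm_mul, nm_mul, nm_k, nm_k, nm_p] at h3
  have h4 : nm f * nm g ≠ 0 := mul_ne_zero (nm_ne _ hm) (nm_ne _ hn)
  have h5 : algebraMap K R (p ^ N) = 1 := by
    apply mul_right_cancel₀ h4
    rw [one_mul, mul_comm (nm f), h3, mul_comm (nm g)]
  exact (algebraMap K R).injective (by rw [h5, map_one])

lemma wgen_rel (K : Type*) [Field K] (q : K) :
    wgen K q 0 * wgen K q 1 = q • (wgen K q 1 * wgen K q 0) + 1 := by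
  have := RingQuot.mkAlgHom_rel K (WeylRel.rel (K := K) (q := q))
  simpa [wgen] using this

lemma wgen_comm {K : Type*} [Field K] {q : K} {T : Type*} [Ring T] [Algebra K T]
    (ψ : QuantumWeyl K q →ₐ[K] T)
    (h : ψ (wgen K q 0) * ψ (wgen K q 1) = ψ (wgen K q 1) * ψ (wgen K q 0)) (a b) :
    Commute (ψ a) (ψ b) := by
  have key : ∀ c : T, Commute (ψ (wgen K q 0)) c → Commute (ψ (wgen K q 1)) c →
      ∀ a, Commute (ψ a) c := by
    intro c h0 h1 a
    obtain ⟨a, rfl⟩ := RingQuot.mkAlgHom_surjective K (WeylRel K q) a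
    induction a using FreeAlgebra.induction with
    | grade0 r =>
      rw [AlgHom.commutes, AlgHom.commutes]
      exact Algebra.commutes r c
    | grade1 i => fin_cases i
                  · exact h0
                  · exact h1
    | mul a b ha hb => rw [map_mul, map_mul]; exact ha.mul_left hb
    | add a b ha hb => rw [map_add, map_add]; exact ha.add_left hb
  have h' : Commute (ψ (wgen K q 0)) (ψ (wgen K q 1)) := h
  refine key _ ?_ ?_ a
  · exact (key _ (Commute.refl _) h'.symm b).symm
  · exact (key _ h' (Commute.refl _) b).symm

open SkewMonoidAlgebra Multiplicative in
lemma weyl_core {K R : Type*} [Field K] [Field R] [Algebra K R]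
    [MulSemiringAction (Multiplicative ℕ) R] [SMulCommClass (Multiplicative ℕ) K R]
    (N : ℕ) (hN : ∀ r : R, (ofAdd N : Multiplicative ℕ) • r = r)
    (p q : K) (hq1 : q ≠ 1) (u : R) (hu : u ≠ 0)
    (hqu : (ofAdd 1 : Multiplicative ℕ) • u = q • u)
    (φ : QuantumWeyl K p ≃ₐ[K] QuantumWeyl K q) : p ^ N = 1 := by
  have hq : q - 1 ≠ 0 := sub_ne_zero.2 hq1
  let c : K := (q - 1)⁻¹
  let z : Multiplicative ℕ := ofAdd 1
  let w : R := c • u⁻¹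
  let X : SkewMonoidAlgebra R (Multiplicative ℕ) := single z w - single 1 w
  let Y : SkewMonoidAlgebra R (Multiplicative ℕ) := single 1 u
  have hwu : w * u = algebraMap K R c := by
    simp [w, Algebra.smul_def, mul_assoc, hu]
  have hXY : X * Y = single z (algebraMap K R (q * c)) - single 1 (algebraMap K R c) := by
    simp only [X, Y, sub_mul, single_mul_single, mul_one, one_smul, hwu]
    rw [hqu, mul_smul_comm, hwu, Algebra.smul_def, map_mul]
  have hYX : Y * X = single z (algebraMap K R c) - single 1 (algebraMap K R c) := by
    simp only [X, Y, mul_sub, single_mul_single, mul_one, one_mul, one_smul, mul_comm u w, hwu]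
  have hrel : X * Y = q • (Y * X) + 1 := by
    have hc : (1 : R) = algebraMap K R (q * c) - algebraMap K R c := by
      rw [← map_sub, ← map_one (algebraMap K R)]
      congr 1
      simp only [c]
      field_simp
    rw [hXY, hYX, smul_sub, smul_single, smul_single, Algebra.smul_def, ← map_mul, one_def, hc,
      sub_eq_add_neg (algebraMap K R (q * c)), single_add, single_neg]
    abel
  let ρ : QuantumWeyl K q →ₐ[K] SkewMonoidAlgebra R (Multiplicative ℕ) :=
    RingQuot.liftAlgHom K ⟨FreeAlgebra.lift K ![X, Y], by
      rintro _ _ ⟨⟩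
      simpa using hrel⟩
  have hρ0 : ρ (wgen K q 0) = X := by simp [ρ, wgen]
  have hρ1 : ρ (wgen K q 1) = Y := by simp [ρ, wgen]
  let ψ := ρ.comp φ.toAlgHom
  set A := ψ (wgen K p 0) with hA
  set B := ψ (wgen K p 1) with hB
  have hAB : A * B = p • (B * A) + 1 := by
    rw [hA, hB, ← map_mul, wgen_rel]; simp
  have hA0 : A ≠ 0 := by
    intro h
    rw [h] at hAB
    simp at hAB
  have hZ : A * B - B * A ≠ 0 := by
    intro h
    have hc := wgen_comm ψ (sub_eq_zero.1 h) (φ.symm (wgen K q 0)) (φ.symm (wgen K q 1))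
    have e0 : ψ (φ.symm (wgen K q 0)) = X := by simp [ψ, hρ0]
    have e1 : ψ (φ.symm (wgen K q 1)) = Y := by simp [ψ, hρ1]
    rw [e0, e1, Commute, SemiconjBy, hXY, hYX, sub_left_inj] at hc
    have h3 := (algebraMap K R).injective (single_injective _ hc)
    have : c ≠ 0 := inv_ne_zero hq
    exact hq1 (mul_right_cancel₀ this (by rw [h3, one_mul]))
  refine skew_pow_eq_one N hN p A (A * B - B * A) hA0 hZ ?_
  have e : A * B - B * A = (p - 1) • (B * A) + 1 := by
    rw [hAB, sub_smul, one_smul]; abel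
  have e2 : A * (B * A) = p • (B * A * A) + A := by
    rw [← mul_assoc, hAB, add_mul, smul_mul_assoc, one_mul]
  rw [e, mul_add, mul_smul_comm, e2, add_mul, smul_mul_assoc, mul_one, one_mul]
  module

open Polynomial Multiplicative in
lemma weyl_half {K : Type*} [Field K] (p q : Kˣ) (hq : ∃ n : ℕ, 0 < n ∧ q ^ n = 1)
    (hq1 : (q : K) ≠ 1) (φ : QuantumWeyl K (p : K) ≃ₐ[K] QuantumWeyl K (q : K)) :
    ∃ m : ℕ, 0 < m ∧ p = q ^ m := by
  have hfin : IsOfFinOrder q := isOfFinOrder_iff_pow_eq_one.2 hq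
  have hpos : 0 < orderOf q := hfin.orderOf_pos
  haveI : Invertible (q : K) := Units.invertible q
  let σ₀ : K[X] ≃ₐ[K] K[X] := algEquivCMulXAddC (q : K) 0
  let σ : FractionRing K[X] ≃ₐ[K] FractionRing K[X] :=
    IsFractionRing.fieldEquivOfAlgEquivHom K (FractionRing K[X]) σ₀
  have hσ₀X : ∀ n : ℕ, (σ₀ ^ n) X = C ((q : K) ^ n) * X := by
    intro n
    induction n with
    | zero => simp
    | succ n ih =>
      rw [pow_succ', AlgEquiv.mul_apply, ih]
      simp [σ₀, algEquivCMulXAddC, algEquivOfCompEqX, pow_succ, mul_assoc]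
  have hσ₀ : σ₀ ^ orderOf q = 1 := by
    apply AlgEquiv.coe_toAlgHom_injective
    apply Polynomial.algHom_ext
    have : (q : K) ^ orderOf q = 1 := by
      rw [← Units.val_pow_eq_pow_val, pow_orderOf_eq_one]; rfl
    simpa [this] using hσ₀X (orderOf q)
  have hσ : σ ^ orderOf q = 1 := by
    simp only [σ]
    rw [← map_pow, hσ₀, map_one]
  letI : MulSemiringAction (Multiplicative ℕ) (FractionRing K[X]) :=
    MulSemiringAction.compHom _ (powersHom _ σ)
  have hact : ∀ (n : ℕ) (r : FractionRing K[X]), (ofAdd n : Multiplicative ℕ) • r = (σ ^ n) r :=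
    fun n r => rfl
  haveI : SMulCommClass (Multiplicative ℕ) K (FractionRing K[X]) :=
    ⟨fun n k r => map_smul (σ ^ toAdd n) k r⟩
  have hp : (p : K) ^ orderOf q = 1 := by
    refine weyl_core (R := FractionRing K[X]) (orderOf q) ?_ (p : K) (q : K) hq1
      (algebraMap K[X] _ X) ?_ ?_ φ
    · intro r; rw [hact, hσ]; rfl
    · simp
    · rw [hact, pow_one]
      have h1 := hσ₀X 1
      simp only [pow_one] at h1
      simp only [σ, IsFractionRing.fieldEquivOfAlgEquivHom_apply,
        IsFractionRing.fieldEquivOfAlgEquiv_algebraMap, h1]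
      rw [← smul_eq_C_mul, Algebra.smul_def, Algebra.smul_def, map_mul,
        ← IsScalarTower.algebraMap_apply]
  have hprim : IsPrimitiveRoot (q : K) (orderOf q) :=
    IsPrimitiveRoot.coe_units_iff.2 (IsPrimitiveRoot.orderOf q)
  haveI : NeZero (orderOf q) := ⟨hpos.ne'⟩
  obtain ⟨i, -, hi⟩ := hprim.eq_pow_of_pow_eq_one hp
  refine ⟨i + orderOf q, by omega, ?_⟩
  rw [pow_add, pow_orderOf_eq_one, mul_one]
  ext
  simp [hi]

/-- for `p, q` roots of unity, not equal to `±1`, if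
`A_1^p(K) ≅ A_1^q(K)` then `p` is a positive power of `q`, `q` is a positive
power of `p`, and `p` and `q` have the same multiplicative order. -/
theorem quantumWeyl_iso_root_powers (K : Type*) [Field K] [CharZero K] (p q : Kˣ)
    (hp : ∃ n : ℕ, 0 < n ∧ p ^ n = 1) (hq : ∃ n : ℕ, 0 < n ∧ q ^ n = 1)
    (hp1 : (p : K) ≠ 1) (hp2 : (p : K) ≠ -1) (hq1 : (q : K) ≠ 1) (hq2 : (q : K) ≠ -1)
    (h : Nonempty (QuantumWeyl K (p : K) ≃ₐ[K] QuantumWeyl K (q : K))) :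
    (∃ m : ℕ, 0 < m ∧ p = q ^ m) ∧ (∃ t : ℕ, 0 < t ∧ q = p ^ t) ∧
      orderOf p = orderOf q := by
  obtain ⟨φ⟩ := h
  obtain ⟨m, hm, hpm⟩ := weyl_half p q hq hq1 φ
  obtain ⟨t, ht, hqt⟩ := weyl_half q p hp hp1 φ.symm
  refine ⟨⟨m, hm, hpm⟩, ⟨t, ht, hqt⟩, Nat.dvd_antisymm ?_ ?_⟩
  · rw [hpm]; exact orderOf_pow_dvd m
  · rw [hqt]; exact orderOf_pow_dvd t
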